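/- Asymptotic RVQ gain for the MISO channel: Fix a real B̄ ≥ 0. Then 2^{B̄·N_t}·Beta(2^{B̄·N_t}, N_t/(N_t − 1)) → 2^{−B̄} as the integer N_t → ∞; equivalently, the mean E[ν] = 1 − 2^{B̄·N_t}·Beta(2^{B̄·N_t}, N_t/(N_t−1)) converges to 1 − 2^{−B̄}. -/

import Mathlib

/-- The Euler Beta function `Beta(x,y) = ∫₀¹ t^{x-1} (1-t)^{y-1} dt`. -/
noncomputable def Beta (x y : ℝ) : ℝ := ∫ t in (0:ℝ)..1, t ^ (x - 1) * (1 - t) ^ (y - 1)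

/-! Write `x * Beta x y = Γ(y) * Γ(x + 1) / Γ(x + y)`. Log-convexity of `Γ` traps
`Γ(x + 1) / Γ(x + y)` between `(x + 1) ^ (1 - y)` and `x ^ (1 - y)` when `1 ≤ y ≤ 2`. Along
`x = 2 ^ (B * n)`, `y = n / (n - 1) → 1`, these bounds differ by a factor tending to `1`, and
`x ^ (1 - y) = 2 ^ (-B * n / (n - 1)) → 2 ^ (-B)`. -/

open Filter Topology

theorem ofReal_Beta (x y : ℝ) : (Beta x y : ℂ) = Complex.betaIntegral x y := by
  rw [Beta, Complex.betaIntegral, ← intervalIntegral.integral_ofReal]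
  refine intervalIntegral.integral_congr fun t ht => ?_
  rw [Set.uIcc_of_le zero_le_one] at ht
  push_cast [Complex.ofReal_cpow ht.1, Complex.ofReal_cpow (sub_nonneg.2 ht.2)]
  rfl

section Bounds

variable {x y : ℝ}

theorem Beta_eq_Gamma_mul_div (hx : 0 < x) (hy : 0 < y) :
    Beta x y = Real.Gamma x * Real.Gamma y / Real.Gamma (x + y) := by
  have h := ProbabilityTheory.beta_eq_betaIntegralReal x y hx hy
  rwa [← ofReal_Beta, Complex.ofReal_re, ProbabilityTheory.beta, eq_comm] at h

theorem mul_Beta_eq_Gamma_mul_div (hx : 0 < x) (hy : 0 < y) :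
    x * Beta x y = Real.Gamma y * (Real.Gamma (x + 1) / Real.Gamma (x + y)) := by
  rw [Beta_eq_Gamma_mul_div hx hy, Real.Gamma_add_one hx.ne']
  ring

theorem Gamma_add_le_Gamma_mul_rpow {s : ℝ} (hx : 0 < x) (hs₀ : 0 ≤ s) (hs₁ : s ≤ 1) :
    Real.Gamma (x + s) ≤ Real.Gamma x * x ^ s := by
  have hΓ : 0 < Real.Gamma x := Real.Gamma_pos_of_pos hx
  have hconv : Real.log (Real.Gamma ((1 - s) * x + s * (x + 1))) ≤
      (1 - s) * Real.log (Real.Gamma x) + s * Real.log (Real.Gamma (x + 1)) :=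
    Real.convexOn_log_Gamma.2 hx (add_pos hx one_pos) (sub_nonneg.2 hs₁) hs₀ (sub_add_cancel 1 s)
  rw [← Real.log_le_log_iff (Real.Gamma_pos_of_pos (by positivity)) (by positivity)]
  calc Real.log (Real.Gamma (x + s))
      = Real.log (Real.Gamma ((1 - s) * x + s * (x + 1))) := by ring_nf
    _ ≤ (1 - s) * Real.log (Real.Gamma x) + s * Real.log (Real.Gamma (x + 1)) := hconv
    _ = Real.log (Real.Gamma x * x ^ s) := by
      rw [Real.Gamma_add_one hx.ne', Real.log_mul hx.ne' hΓ.ne',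
        Real.log_mul hΓ.ne' (by positivity), Real.log_rpow hx]
      ring

theorem rpow_one_sub_le_Gamma_div (hx : 0 < x) (hy₁ : 1 ≤ y) (hy₂ : y ≤ 2) :
    (x + 1) ^ (1 - y) ≤ Real.Gamma (x + 1) / Real.Gamma (x + y) := by
  have hx₁ : 0 < x + 1 := by positivity
  have h : Real.Gamma (x + y) ≤ Real.Gamma (x + 1) * (x + 1) ^ (y - 1) := by
    convert Gamma_add_le_Gamma_mul_rpow hx₁ (sub_nonneg.2 hy₁) (by linarith) using 2
    ring
  rwa [← neg_sub, Real.rpow_neg hx₁.le, le_div_iff₀ (Real.Gamma_pos_of_pos (by positivity)),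
    inv_mul_le_iff₀' (by positivity)]

theorem Gamma_div_le_rpow_one_sub (hx : 0 < x) (hy₁ : 1 ≤ y) (hy₂ : y ≤ 2) :
    Real.Gamma (x + 1) / Real.Gamma (x + y) ≤ x ^ (1 - y) := by
  set z := x + y - 1 with hz
  have hxz : x ≤ z := by linarith
  have hz₀ : 0 < z := hx.trans_le hxz
  rw [div_le_iff₀' (Real.Gamma_pos_of_pos (by positivity))]
  calc Real.Gamma (x + 1)
      = Real.Gamma (z + (2 - y)) := by rw [hz]; ring_nf
    _ ≤ Real.Gamma z * z ^ (2 - y) :=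
      Gamma_add_le_Gamma_mul_rpow hz₀ (sub_nonneg.2 hy₂) (by linarith)
    _ = z * Real.Gamma z * z ^ (1 - y) := by
      rw [show 2 - y = 1 + (1 - y) by ring, Real.rpow_add hz₀, Real.rpow_one]
      ring
    _ = Real.Gamma (x + y) * z ^ (1 - y) := by
      rw [← Real.Gamma_add_one hz₀.ne', hz, sub_add_cancel]
    _ ≤ Real.Gamma (x + y) * x ^ (1 - y) := by
      have hmono : z ^ (1 - y) ≤ x ^ (1 - y) :=
        Real.rpow_le_rpow_of_nonpos hx hxz (sub_nonpos.2 hy₁)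
      gcongr

end Bounds

section Limits

variable {ι : Type*} {l : Filter ι} {x y : ι → ℝ} {c L : ℝ}

/- Since `x ≥ c`, we have `x + 1 ≤ (1 + c⁻¹) * x`, and the constant factor disappears in the
limit because its exponent `1 - y` tends to `0`. -/
theorem tendsto_Gamma_add_one_div_Gamma_add (hc : 0 < c) (hx : ∀ᶠ i in l, c ≤ x i)
    (hy : Tendsto y l (𝓝[≥] 1)) (hL : Tendsto (fun i => x i ^ (1 - y i)) l (𝓝 L)) :
    Tendsto (fun i => Real.Gamma (x i + 1) / Real.Gamma (x i + y i)) l (𝓝 L) := by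
  obtain ⟨hy_lim, hy₁⟩ := tendsto_nhdsWithin_iff.1 hy
  have hy₂ : ∀ᶠ i in l, y i ≤ 2 := hy_lim.eventually_le_const one_lt_two
  have hconst : Tendsto (fun i => (1 + c⁻¹) ^ (1 - y i)) l (𝓝 1) := by
    have hne : 1 + c⁻¹ ≠ 0 := by positivity
    simpa using tendsto_const_nhds.rpow (hy_lim.const_sub 1) (Or.inl hne)
  have hlower : Tendsto (fun i => (1 + c⁻¹) ^ (1 - y i) * x i ^ (1 - y i)) l (𝓝 L) := by
    simpa using hconst.mul hL
  refine tendsto_of_tendsto_of_tendsto_of_le_of_le' hlower hL ?_ ?_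
  · filter_upwards [hx, hy₁, hy₂] with i hxi hy₁i hy₂i
    have hxi₀ : 0 < x i := hc.trans_le hxi
    have hle : x i + 1 ≤ (1 + c⁻¹) * x i := by
      have : 1 ≤ c⁻¹ * x i := (one_le_inv_mul₀ hc).2 hxi
      linarith
    calc (1 + c⁻¹) ^ (1 - y i) * x i ^ (1 - y i)
        = ((1 + c⁻¹) * x i) ^ (1 - y i) := (Real.mul_rpow (by positivity) hxi₀.le).symm
      _ ≤ (x i + 1) ^ (1 - y i) :=
        Real.rpow_le_rpow_of_nonpos (by positivity) hle (sub_nonpos.2 hy₁i)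
      _ ≤ Real.Gamma (x i + 1) / Real.Gamma (x i + y i) :=
        rpow_one_sub_le_Gamma_div hxi₀ hy₁i hy₂i
  · filter_upwards [hx, hy₁, hy₂] with i hxi hy₁i hy₂i
    exact Gamma_div_le_rpow_one_sub (hc.trans_le hxi) hy₁i hy₂i

theorem tendsto_mul_Beta (hc : 0 < c) (hx : ∀ᶠ i in l, c ≤ x i)
    (hy : Tendsto y l (𝓝[≥] 1)) (hL : Tendsto (fun i => x i ^ (1 - y i)) l (𝓝 L)) :
    Tendsto (fun i => x i * Beta (x i) (y i)) l (𝓝 L) := by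
  obtain ⟨hy_lim, hy₁⟩ := tendsto_nhdsWithin_iff.1 hy
  have hcont : ContinuousAt Real.Gamma 1 :=
    (Real.differentiableOn_Gamma_Ioi.differentiableAt (Ioi_mem_nhds one_pos)).continuousAt
  have hΓ : Tendsto (fun i => Real.Gamma (y i)) l (𝓝 1) := by
    simpa [Function.comp_def] using hcont.tendsto.comp hy_lim
  have hlim := hΓ.mul (tendsto_Gamma_add_one_div_Gamma_add hc hx hy hL)
  rw [one_mul] at hlim
  refine hlim.congr' ?_
  filter_upwards [hx, hy₁] with i hxi hy₁i
  exact (mul_Beta_eq_Gamma_mul_div (hc.trans_le hxi) (one_pos.trans_le hy₁i)).symm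

end Limits

theorem tendsto_natCast_div_sub_one_atTop :
    Tendsto (fun n : ℕ => (n : ℝ) / (n - 1)) atTop (𝓝[≥] 1) := by
  refine tendsto_nhdsWithin_iff.2
    ⟨by simpa [sub_eq_add_neg] using tendsto_natCast_div_add_atTop (-1 : ℝ), ?_⟩
  filter_upwards [eventually_gt_atTop 1] with n hn
  have hn' : (1 : ℝ) < n := mod_cast hn
  exact (one_le_div (sub_pos.2 hn')).2 (by linarith)

theorem tendsto_rpow_mul_natCast_rpow {a : ℝ} (ha : 0 < a) (b : ℝ) :
    Tendsto (fun n : ℕ => (a ^ (b * n)) ^ (1 - (n : ℝ) / (n - 1))) atTop (𝓝 (a ^ (-b))) := by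
  have hexp : Tendsto (fun n : ℕ => -b * ((n : ℝ) / (n - 1))) atTop (𝓝 (-b)) := by
    simpa using (tendsto_natCast_div_sub_one_atTop.mono_right nhdsWithin_le_nhds).const_mul (-b)
  refine (tendsto_const_nhds.rpow hexp (Or.inl ha.ne')).congr' ?_
  filter_upwards [eventually_gt_atTop 1] with n hn
  have hn' : (n : ℝ) - 1 ≠ 0 := sub_ne_zero.2 (mod_cast hn.ne')
  rw [← Real.rpow_mul ha.le]
  congr 1
  field_simp
  ring

/-- Asymptotic RVQ gain for the MISO channel: for fixed `B̄ ≥ 0`,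
`2^{B̄·N_t}·Beta(2^{B̄·N_t}, N_t/(N_t − 1)) → 2^{−B̄}` as `N_t → ∞`; equivalently, the mean
`E[ν] = 1 − 2^{B̄·N_t}·Beta(2^{B̄·N_t}, N_t/(N_t−1))` converges to `1 − 2^{−B̄}`. -/
theorem rvq_gain_asymptotics (Bbar : ℝ) (hB : 0 ≤ Bbar) :
    Filter.Tendsto
      (fun Nt : ℕ =>
        (2:ℝ) ^ (Bbar * (Nt : ℝ)) *
          Beta ((2:ℝ) ^ (Bbar * (Nt : ℝ))) ((Nt : ℝ) / ((Nt : ℝ) - 1)))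
      Filter.atTop (nhds ((2:ℝ) ^ (-Bbar))) ∧
    Filter.Tendsto
      (fun Nt : ℕ =>
        1 - (2:ℝ) ^ (Bbar * (Nt : ℝ)) *
          Beta ((2:ℝ) ^ (Bbar * (Nt : ℝ))) ((Nt : ℝ) / ((Nt : ℝ) - 1)))
      Filter.atTop (nhds (1 - (2:ℝ) ^ (-Bbar))) := by
  have hx : ∀ n : ℕ, 1 ≤ (2 : ℝ) ^ (Bbar * n) := fun n =>
    Real.one_le_rpow one_le_two (by positivity)
  have hgain := tendsto_mul_Beta one_pos (Eventually.of_forall hx) tendsto_natCast_div_sub_one_atTop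
    (tendsto_rpow_mul_natCast_rpow two_pos Bbar)
  exact ⟨hgain, hgain.const_sub 1⟩
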